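/- Let K be a field, V' a K-vector space, V ⊆ V' a K-subspace such that the quotient V'/V has infinite dimension over K (Module.rank K (V'⧸V) ≥ ℵ₀), S a set of monic irreducible polynomials over K, and c : S → ℕ a function. If θ : V → V is a K-linear endomorphism such that ker((f^{c(f)})(θ)) = ker((f^{c(f)+1})(θ)) for every f ∈ S, then there exists a K-linear endomorphism θ' : V' → V' extending θ (θ'(v) = θ(v) for all v ∈ V) such that ker((f^{c(f)})(θ')) = ker((f^{c(f)+1})(θ')) for every f ∈ S. -/

import Mathlib

open Polynomial in
/-- An infinite-dimensional vector space carries an endomorphism `φ` making it a torsion-free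
`K[X]`-module. -/
theorem exists_end_aeval_injective {K W : Type*} [Field K] [AddCommGroup W] [Module K W]
    (hW : Cardinal.aleph0 ≤ Module.rank K W) :
    ∃ φ : Module.End K W, ∀ p : K[X], p ≠ 0 → Function.Injective (aeval φ p) := by
  let b := Module.Basis.ofVectorSpace K W
  have : Infinite (Module.Basis.ofVectorSpaceIndex K W) := by
    rwa [Cardinal.infinite_iff, b.mk_eq_rank'']
  obtain ⟨e⟩ : Nonempty (Module.Basis.ofVectorSpaceIndex K W ≃
      Σ _ : Module.Basis.ofVectorSpaceIndex K W, ℕ) := by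
    rw [← Cardinal.eq]
    simp
  let ε := b.equiv (Finsupp.basis fun _ => basisMonomials K) e
  let ψ := Algebra.lsmul (A := K[X]) K K (Module.Basis.ofVectorSpaceIndex K W →₀ K[X])
  refine ⟨ε.symm.conjAlgEquiv K (ψ X), fun p hp => ?_⟩
  rw [aeval_algHom_apply, aeval_algHom_apply, aeval_X_left_apply, LinearEquiv.conjAlgEquiv_apply]
  simpa [ψ] using smul_right_injective _ hp

open Polynomial in
theorem LinearMap.aeval_prodMap {R M N : Type*} [CommRing R] [AddCommGroup M] [AddCommGroup N]
    [Module R M] [Module R N] (α : Module.End R M) (β : Module.End R N) (p : R[X]) :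
    aeval (α.prodMap β : Module.End R (M × N)) p = (aeval α p).prodMap (aeval β p) := by
  have h := aeval_algHom_apply (prodMapAlgHom R M N) (α, β) p
  rw [aeval_prod_apply] at h
  exact h

/-- Standard Construction, transcendental case: a `K`-linear
endomorphism `θ` of a subspace `V ⊆ V'` with `dim(V'/V) ≥ ℵ₀` satisfying the
kernel stabilization conditions `ker((f^{c f})(θ)) = ker((f^{c f + 1})(θ))` for
all `f` in a set `S` of monic irreducible polynomials extends to a `K`-linear
endomorphism `θ'` of `V'` satisfying the same kernel stabilization conditions. -/
theorem extend_endomorphism_transcendental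
    {K V' : Type*} [Field K] [AddCommGroup V'] [Module K V']
    (V : Submodule K V')
    (hrank : Cardinal.aleph0 ≤ Module.rank K (V' ⧸ V))
    (S : Set (Polynomial K)) (hS : ∀ f ∈ S, f.Monic ∧ Irreducible f)
    (c : Polynomial K → ℕ)
    (θ : V →ₗ[K] V)
    (hθ : ∀ f ∈ S, LinearMap.ker (Polynomial.aeval θ (f ^ c f)) =
      LinearMap.ker (Polynomial.aeval θ (f ^ (c f + 1)))) :
    ∃ θ' : V' →ₗ[K] V',
      (∀ v : V, θ' ↑v = ↑(θ v)) ∧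
      ∀ f ∈ S, LinearMap.ker (Polynomial.aeval θ' (f ^ c f)) =
        LinearMap.ker (Polynomial.aeval θ' (f ^ (c f + 1))) := by
  obtain ⟨W, hVW⟩ := V.exists_isCompl
  obtain ⟨φ, hφ⟩ := exists_end_aeval_injective
    (hrank.trans_eq (V.quotientEquivOfIsCompl W hVW).rank_eq)
  let e := V.prodEquivOfIsCompl W hVW
  refine ⟨e.conjAlgEquiv K (θ.prodMap φ), fun v => ?_, fun f hf => ?_⟩
  · simp [LinearEquiv.conjAlgEquiv_apply, e]
  · have key (n : ℕ) (x : V') :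
        Polynomial.aeval (e.conjAlgEquiv K (θ.prodMap φ)) (f ^ n) x = 0 ↔
          (e.symm x).1 ∈ LinearMap.ker (Polynomial.aeval θ (f ^ n)) ∧ (e.symm x).2 = 0 := by
      rw [Polynomial.aeval_algHom_apply, LinearMap.aeval_prodMap]
      simp only [LinearEquiv.conjAlgEquiv_apply, LinearMap.comp_apply, LinearEquiv.coe_coe,
        EmbeddingLike.map_eq_zero_iff, LinearMap.prodMap_apply, Prod.mk_eq_zero,
        LinearMap.mem_ker]
      rw [map_eq_zero_iff _ (hφ _ (pow_ne_zero n (hS f hf).1.ne_zero))]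
    ext x
    rw [LinearMap.mem_ker, LinearMap.mem_ker, key, key, hθ f hf]
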